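/- arXiv:2208.09160 — 3 statements merged into one kernel-verified Lean document; each statement's English description precedes it below -/
import Mathlib

section
/- Let C_1, …, C_m be clauses over n Boolean variables, for an assignment A let m_A denote the number of these clauses satisfied by A, and let opt = max_A m_A. Let W be a sub-collection of the clauses and for an assignment A let m'_A denote the number of clauses of W satisfied by A. Suppose p > 0 and 0 ≤ ε are real numbers such that |m'_A − p · m_A| ≤ ε · p · opt for every assignment A. If 0 ≤ α ≤ 1 and à is an assignment with m'_à ≥ α · max_A m'_A, then m_à ≥ (α − 2ε) · opt. -/
/-- An assignment `a` satisfies a clause `C` iff some literal `(i, b) ∈ C` has `a i = b`. -/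
def Satisfies {n : ℕ} (a : Fin n → Bool) (C : Finset (Fin n × Bool)) : Prop :=
  ∃ l ∈ C, a l.1 = l.2

instance {n : ℕ} (a : Fin n → Bool) (C : Finset (Fin n × Bool)) :
    Decidable (Satisfies a C) := by
  unfold Satisfies; infer_instance

/-- The number of clauses of the sub-collection `W ⊆ {1, …, m}` satisfied by `a`. -/
def satCount (n m : ℕ) (C : Fin m → Finset (Fin n × Bool)) (W : Finset (Fin m))
    (a : Fin n → Bool) : ℕ :=
  (W.filter fun j => Satisfies a (C j)).card

/-- Let `C 1, …, C m` be clauses over `n` Boolean variables, `m_A` the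
number of clauses satisfied by an assignment `A`, and `opt = max_A m_A`. Let `W` be a
sub-collection of the clauses and `m'_A` the number of clauses of `W` satisfied by `A`.
Suppose `p > 0` and `ε ≥ 0` are such that `|m'_A − p·m_A| ≤ ε·p·opt` for every `A`.
If `0 ≤ α ≤ 1` and `Ã` satisfies `m'_Ã ≥ α · max_A m'_A`, then `m_Ã ≥ (α − 2ε)·opt`. -/
theorem stmt_7 (n m : ℕ) (C : Fin m → Finset (Fin n × Bool)) (W : Finset (Fin m))
    (p ε α : ℝ) (hp : 0 < p) (hε : 0 ≤ ε) (hα0 : 0 ≤ α) (hα1 : α ≤ 1)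
    (Atil : Fin n → Bool)
    (hclose : ∀ A : Fin n → Bool,
      |(satCount n m C W A : ℝ) - p * (satCount n m C Finset.univ A : ℝ)|
        ≤ ε * p * (⨆ A' : Fin n → Bool, (satCount n m C Finset.univ A' : ℝ)))
    (happrox : α * (⨆ A' : Fin n → Bool, (satCount n m C W A' : ℝ))
        ≤ (satCount n m C W Atil : ℝ)) :
    (α - 2 * ε) * (⨆ A' : Fin n → Bool, (satCount n m C Finset.univ A' : ℝ))
      ≤ (satCount n m C Finset.univ Atil : ℝ) := by
  obtain ⟨B, hB⟩ := exists_eq_ciSup_of_finite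
    (f := fun A' : Fin n → Bool => (satCount n m C Finset.univ A' : ℝ))
  have hW : (satCount n m C W B : ℝ) ≤ ⨆ A' : Fin n → Bool, (satCount n m C W A' : ℝ) :=
    le_ciSup (f := fun A' : Fin n → Bool => (satCount n m C W A' : ℝ))
      (Set.finite_range _).bddAbove B
  have h1 := (abs_le.mp (hclose B)).1
  have h2 := (abs_le.mp (hclose Atil)).2
  rw [← hB] at h1 h2 ⊢
  have hM : (0 : ℝ) ≤ (satCount n m C Finset.univ B : ℝ) := Nat.cast_nonneg _
  generalize (satCount n m C Finset.univ B : ℝ) = M at *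
  have h3 := mul_le_mul_of_nonneg_left hW hα0
  have h4 : α * (p * M - ε * p * M) ≤ α * (satCount n m C W B : ℝ) :=
    mul_le_mul_of_nonneg_left (by linarith) hα0
  have h5 : 0 ≤ (1 - α) * (ε * p * M) :=
    mul_nonneg (by linarith) (mul_nonneg (mul_nonneg hε hp.le) hM)
  refine le_of_mul_le_mul_left ?_ hp
  linarith
end

section
/- Let C_1, …, C_m be clauses over n ≥ 1 Boolean variables, let f ≥ 1, and suppose every variable occurs (in either polarity) in at most f of the clauses. Let opt denote the minimum over all assignments of the number of clauses satisfied, and assume opt ≥ 1. Call a clause small if it has at most √(f·n) literals, and for each literal ℓ let S_ℓ be the set of indices of small clauses containing ℓ. Define an assignment a by setting a i = true if |S_{(i,true)}| ≤ |S_{(i,false)}| and a i = false otherwise. Then the number of clauses (small or large) satisfied by a is at most 2·√(f·n)·opt. -/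
/-- `smallSet n m C f l` is the set `S_ℓ` of indices of small clauses (clauses with at
most `√(f·n)` literals) containing the literal `l`. -/
noncomputable def smallSet (n m : ℕ) (C : Fin m → Finset (Fin n × Bool)) (f : ℕ)
    (l : Fin n × Bool) : Finset (Fin m) :=
  Finset.univ.filter fun j => ((C j).card : ℝ) ≤ Real.sqrt ((f : ℝ) * n) ∧ l ∈ C j

/-- Let `C 1, …, C m` be clauses over `n ≥ 1` Boolean variables, `f ≥ 1`,
each variable occurring (in either polarity) in at most `f` clauses. Let `opt ≥ 1` be
the minimum number of satisfied clauses over all assignments. Call a clause small if it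
has at most `√(f·n)` literals, and let `S_ℓ` be the set of indices of small clauses
containing literal `ℓ`. Define `a` by `a i = true` iff `|S_(i,true)| ≤ |S_(i,false)|`.
Then `a` satisfies at most `2·√(f·n)·opt` clauses. -/
theorem stmt_12 (n m : ℕ) (hn : 1 ≤ n) (f : ℕ) (hf : 1 ≤ f)
    (C : Fin m → Finset (Fin n × Bool))
    (hgood : ∀ j (i : Fin n), ¬ (((i, true) ∈ C j) ∧ ((i, false) ∈ C j)))
    (hocc : ∀ i : Fin n,
      (Finset.univ.filter fun j => (i, true) ∈ C j ∨ (i, false) ∈ C j).card ≤ f)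
    (hopt : 1 ≤ ⨅ A : Fin n → Bool, (Finset.univ.filter fun j => Satisfies A (C j)).card)
    (a : Fin n → Bool)
    (ha : ∀ i : Fin n,
      a i = true ↔ (smallSet n m C f (i, true)).card ≤ (smallSet n m C f (i, false)).card) :
    ((Finset.univ.filter fun j => Satisfies a (C j)).card : ℝ)
      ≤ 2 * Real.sqrt ((f : ℝ) * n) *
          ((⨅ A : Fin n → Bool, (Finset.univ.filter fun j => Satisfies A (C j)).card : ℕ) : ℝ) := by
  classical
  obtain ⟨A, hA⟩ := exists_eq_ciInf_of_finite
    (f := fun A : Fin n → Bool => (Finset.univ.filter fun j => Satisfies A (C j)).card)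
  rw [← hA] at hopt ⊢
  set s : ℝ := Real.sqrt ((f : ℝ) * n) with hs
  have hfn : (1 : ℝ) ≤ (f : ℝ) * n := by
    have : 1 ≤ f * n := Nat.mul_pos hf hn
    exact_mod_cast this
  have hs1 : 1 ≤ s := by rw [hs]; exact Real.one_le_sqrt.mpr hfn
  have hss : s * s = f * n := Real.mul_self_sqrt (by linarith)
  let small : Finset (Fin m) := Finset.univ.filter fun j => ((C j).card : ℝ) ≤ s
  let large : Finset (Fin m) := Finset.univ.filter fun j => ¬ ((C j).card : ℝ) ≤ s
  let satS : (Fin n → Bool) → Finset (Fin m) := fun B => small.filter fun j => Satisfies B (C j)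
  -- splitting into small and large
  have hsplit : (Finset.univ.filter fun j => Satisfies a (C j)).card
      ≤ (satS a).card + large.card := by
    refine le_trans (Finset.card_le_card ?_) (Finset.card_union_le _ _)
    intro j hj
    simp only [satS, small, large, Finset.mem_union, Finset.mem_filter, Finset.mem_univ,
      true_and] at hj ⊢
    tauto
  -- large clauses
  have hcard : ∀ j, (C j).card
      = (Finset.univ.filter fun i : Fin n => (i, true) ∈ C j ∨ (i, false) ∈ C j).card := by
    intro j
    rw [← Finset.card_image_of_injOn (s := C j) (f := Prod.fst)]
    · congr 1
      ext i
      simp only [Finset.mem_image, Finset.mem_filter, Finset.mem_univ, true_and, Prod.exists,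
        exists_and_right, exists_eq_right, Bool.exists_bool]
      tauto
    · rintro ⟨i, b⟩ h1 ⟨i', b'⟩ h2 h
      simp only at h
      subst h
      have := hgood j i
      cases b <;> cases b' <;> simp_all
  have hsum : ∑ j, (C j).card ≤ n * f := by
    simp_rw [hcard]
    have := Finset.sum_card_bipartiteAbove_eq_sum_card_bipartiteBelow
      (s := (Finset.univ : Finset (Fin m))) (t := (Finset.univ : Finset (Fin n)))
      (fun j i => (i, true) ∈ C j ∨ (i, false) ∈ C j)
    unfold Finset.bipartiteAbove Finset.bipartiteBelow at this
    rw [this]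
    refine (Finset.sum_le_sum fun i _ => hocc i).trans ?_
    simp
  have hlarge : (large.card : ℝ) ≤ s := by
    have h1 : (large.card : ℝ) * s ≤ ∑ j ∈ large, ((C j).card : ℝ) := by
      rw [← nsmul_eq_mul]
      refine Finset.card_nsmul_le_sum _ _ _ fun j hj => ?_
      have := (Finset.mem_filter.mp hj).2
      linarith
    have h2 : ∑ j ∈ large, ((C j).card : ℝ) ≤ ∑ j, ((C j).card : ℝ) :=
      Finset.sum_le_sum_of_subset_of_nonneg (Finset.subset_univ _) fun _ _ _ => by positivity
    have h3 : ∑ j, ((C j).card : ℝ) ≤ n * f := by exact_mod_cast hsum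
    have : (large.card : ℝ) * s ≤ s * s := by rw [hss]; linarith
    exact le_of_mul_le_mul_right this (by linarith)
  -- small clauses
  have hstep1 : (satS a).card ≤ ∑ i, (smallSet n m C f (i, a i)).card := by
    refine le_trans (Finset.card_le_card ?_) Finset.card_biUnion_le
    intro j hj
    obtain ⟨hj1, ⟨i, b⟩, hl, hb⟩ := Finset.mem_filter.mp hj
    simp only at hb
    subst hb
    simp only [Finset.mem_biUnion, Finset.mem_univ, true_and]
    exact ⟨i, Finset.mem_filter.mpr ⟨Finset.mem_univ _, (Finset.mem_filter.mp hj1).2, hl⟩⟩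
  have hstep2 : ∑ i, (smallSet n m C f (i, a i)).card
      ≤ ∑ i, (smallSet n m C f (i, A i)).card := by
    refine Finset.sum_le_sum fun i _ => ?_
    have h := ha i
    cases h1 : a i <;> cases h2 : A i <;> simp [h1] at h ⊢ <;> omega
  have hstep3 : ∑ i, (smallSet n m C f (i, A i)).card
      = ∑ j, (Finset.univ.filter fun i : Fin n =>
          ((C j).card : ℝ) ≤ s ∧ (i, A i) ∈ C j).card := by
    have := Finset.sum_card_bipartiteAbove_eq_sum_card_bipartiteBelow
      (s := (Finset.univ : Finset (Fin m))) (t := (Finset.univ : Finset (Fin n)))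
      (fun j i => ((C j).card : ℝ) ≤ s ∧ (i, A i) ∈ C j)
    unfold Finset.bipartiteAbove Finset.bipartiteBelow at this
    rw [this]
    refine Finset.sum_congr rfl fun i _ => ?_
    unfold smallSet
    congr
  have hstep4 : ∑ j, ((Finset.univ.filter fun i : Fin n =>
          ((C j).card : ℝ) ≤ s ∧ (i, A i) ∈ C j).card : ℝ)
      ≤ ∑ j, if Satisfies A (C j) then s else 0 := by
    refine Finset.sum_le_sum fun j _ => ?_
    by_cases hk : ((C j).card : ℝ) ≤ s
    · split_ifs with hsat
      · refine le_trans ?_ hk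
        have : (Finset.univ.filter fun i : Fin n =>
          ((C j).card : ℝ) ≤ s ∧ (i, A i) ∈ C j).card ≤ (C j).card := by
          refine Finset.card_le_card_of_injOn (fun i => (i, A i)) ?_ ?_
          · intro i hi
            simp at hi
            exact hi.2
          · intro i _ i' _ h
            exact congrArg Prod.fst h
        exact_mod_cast this
      · have : (Finset.univ.filter fun i : Fin n =>
          ((C j).card : ℝ) ≤ s ∧ (i, A i) ∈ C j) = ∅ := by
          refine Finset.filter_eq_empty_iff.mpr fun i _ h => hsat ⟨(i, A i), h.2, rfl⟩
        rw [this]; simp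
    · have : (Finset.univ.filter fun i : Fin n =>
          ((C j).card : ℝ) ≤ s ∧ (i, A i) ∈ C j) = ∅ :=
        Finset.filter_eq_empty_iff.mpr fun i _ h => hk h.1
      rw [this]
      split_ifs <;> simp
      linarith
  have hstep5 : (∑ j, if Satisfies A (C j) then s else 0)
      = s * ((Finset.univ.filter fun j => Satisfies A (C j)).card : ℝ) := by
    rw [← Finset.sum_filter, Finset.sum_const, nsmul_eq_mul, mul_comm]
  have hsmall : ((satS a).card : ℝ)
      ≤ s * ((Finset.univ.filter fun j => Satisfies A (C j)).card : ℝ) := by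
    rw [← hstep5]
    refine le_trans ?_ hstep4
    exact_mod_cast (hstep1.trans hstep2).trans hstep3.le
  have hopt' : (1 : ℝ) ≤ ((Finset.univ.filter fun j => Satisfies A (C j)).card : ℝ) := by
    exact_mod_cast hopt
  have hsplit' : ((Finset.univ.filter fun j => Satisfies a (C j)).card : ℝ)
      ≤ (satS a).card + large.card := by exact_mod_cast hsplit
  have : s ≤ s * ((Finset.univ.filter fun j => Satisfies A (C j)).card : ℝ) :=
    le_mul_of_one_le_right (by linarith) hopt'
  linarith
end

section
/- Let k, t ≥ 1 and consider Boolean variables indexed by pairs (a, b) ∈ Fin k × Fin t. Let A : (Fin k → Fin t) → Bool and let i : Fin k → Fin t satisfy A i = false. Consider the following clauses: for each j : Fin k → Fin t with A j = true, the clause P_j = { ((a, j a), true) : a ∈ Fin k }; and for each nonempty subset Z ⊆ Fin k, the clause B_Z = { ((a, i a), false) : a ∈ Z } ∪ { ((a, i a), true) : a ∈ Fin k, a ∉ Z }. Then the assignment x defined by x (a, b) = false if b = i a and x (a, b) = true otherwise satisfies every clause P_j with A j = true and every clause B_Z with Z nonempty. -/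
/-- An assignment `x` over variables `V` satisfies a clause `C` (a finite set of
literals, i.e. pairs of a variable and a sign) iff some literal `(v, s) ∈ C` has
`x v = s`. -/
def LSat {V : Type*} (x : V → Bool) (C : Finset (V × Bool)) : Prop :=
  ∃ l ∈ C, x l.1 = l.2

/-- Let `k, t ≥ 1` with Boolean variables indexed by `Fin k × Fin t`.
Let `A : (Fin k → Fin t) → Bool` and `i : Fin k → Fin t` with `A i = false`. For each
`j` with `A j = true`, form the clause `P_j = {((a, j a), true) : a ∈ Fin k}`; for each
nonempty `Z ⊆ Fin k`, form the clause
`B_Z = {((a, i a), false) : a ∈ Z} ∪ {((a, i a), true) : a ∉ Z}`. Then the assignment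
`x` with `x (a, b) = false` iff `b = i a` satisfies every clause `P_j` with `A j = true`
and every clause `B_Z` with `Z` nonempty. -/
theorem stmt_18 (k t : ℕ) (hk : 1 ≤ k) (ht : 1 ≤ t)
    (A : (Fin k → Fin t) → Bool) (i : Fin k → Fin t) (hAi : A i = false)
    (x : Fin k × Fin t → Bool)
    (hx : ∀ (a : Fin k) (b : Fin t), x (a, b) = if b = i a then false else true) :
    (∀ j : Fin k → Fin t, A j = true →
      LSat x (Finset.univ.image fun a : Fin k => (((a, j a) : Fin k × Fin t), true))) ∧
    (∀ Z : Finset (Fin k), Z.Nonempty →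
      LSat x ((Z.image fun a => (((a, i a) : Fin k × Fin t), false)) ∪
        ((Finset.univ \ Z).image fun a => (((a, i a) : Fin k × Fin t), true)))) := by
  refine ⟨fun j hj => ?_, fun Z hZ => ?_⟩
  · have hne : j ≠ i := by
      rintro rfl
      rw [hAi] at hj
      cases hj
    obtain ⟨a, ha⟩ := Function.ne_iff.mp hne
    refine ⟨((a, j a), true), Finset.mem_image.mpr ⟨a, Finset.mem_univ a, rfl⟩, ?_⟩
    change x (a, j a) = true
    rw [hx, if_neg ha]
  · obtain ⟨a, ha⟩ := hZ
    refine ⟨((a, i a), false),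
      Finset.mem_union_left _ (Finset.mem_image.mpr ⟨a, ha, rfl⟩), ?_⟩
    change x (a, i a) = false
    rw [hx, if_pos rfl]
end
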